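/- Every Steiner triple system of order 19 has at most one Veblen point. -/

import Mathlib

/-!
Adjoin an identity `e` to the point set and put `a * a = e` and `a * b = c` for each triple
`{a, b, c}`: this gives a Steiner loop of order 20, in which the translations `L a : c ↦ a * c`
are involutions, without fixed points when `a ≠ e`. A Veblen point `x` is central, so `L x`
commutes with every `L a` (`op_central`).

Suppose `x ≠ y` are two Veblen points and choose `a` outside the subgroup `{e, x, y, x * y}`.
Then `L x`, `L y`, `L a` are commuting involutions, and by centrality every nontrivial product
of them is a translation by an element other than `e`, hence fixed-point free
(`not_two_central`). They thus generate an elementary abelian group of order 8 acting freely on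
20 elements (`eight_dvd`), which is impossible since 8 does not divide 20.
-/


universe u v

/-- `T` is the triple set of a Steiner triple system on the point set `α`:
every member of `T` has three elements, and every pair of distinct points
lies in exactly one member of `T`. -/
def IsSTS {α : Type u} (T : Set (Finset α)) : Prop :=
  (∀ t ∈ T, t.card = 3) ∧
  ∀ a b : α, a ≠ b → ∃! t : Finset α, t ∈ T ∧ a ∈ t ∧ b ∈ t

/-- `x` is a Veblen point of the Steiner triple system with triple set `T`:
whenever `{x,a,b}`, `{x,c,d}` and `{t,a,c}` are triples, so is `{t,b,d}`. -/
def IsVeblen {α : Type u} [DecidableEq α] (T : Set (Finset α)) (x : α) : Prop :=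
  ∀ a b c d t : α, ({x, a, b} : Finset α) ∈ T → ({x, c, d} : Finset α) ∈ T →
    ({t, a, c} : Finset α) ∈ T → ({t, b, d} : Finset α) ∈ T

/-- Isomorphism of Steiner triple systems: a bijection of the point sets carrying
the triples of one system exactly onto the triples of the other. -/
def STSIso {α : Type u} {β : Type v} [DecidableEq β]
    (T₁ : Set (Finset α)) (T₂ : Set (Finset β)) : Prop :=
  ∃ e : α ≃ β, ∀ t : Finset α, t ∈ T₁ ↔ t.image (e : α → β) ∈ T₂

/-- The points of the quotient system at a point `x`: the triples through `x`. -/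
abbrev QuotPts {α : Type u} (T : Set (Finset α)) (x : α) : Type u :=
  {t : Finset α // t ∈ T ∧ x ∈ t}

/-- The triples of the quotient system at a Veblen point `x`: three distinct
triples `T1`, `T2`, `T3` through `x` form a triple iff there are `a ∈ T1 \ {x}`
and `c ∈ T2 \ {x}` such that the third point of the triple through `a` and `c`
lies in `T3`. -/
def QuotTriples {α : Type u} [DecidableEq α] (T : Set (Finset α)) (x : α) :
    Set (Finset (QuotPts T x)) :=
  {b | ∃ T1 T2 T3 : QuotPts T x, T1 ≠ T2 ∧ T1 ≠ T3 ∧ T2 ≠ T3 ∧ b = {T1, T2, T3} ∧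
      ∃ a ∈ T1.1, a ≠ x ∧ ∃ c ∈ T2.1, c ≠ x ∧
        ∃ d, ({a, c, d} : Finset α) ∈ T ∧ d ∈ T3.1}

/-- The nonzero vectors of `GF(2)^n`, i.e. the points of `PG(n-1,2)`. -/
abbrev PGPt (n : ℕ) : Type := {u : Fin n → ZMod 2 // u ≠ 0}

/-- The lines of `PG(n-1,2)`: sets `{u,v,w}` of distinct nonzero vectors of
`GF(2)^n` with `u + v + w = 0`. -/
def PGTriples (n : ℕ) : Set (Finset (PGPt n)) :=
  {t | ∃ u v w : PGPt n, u ≠ v ∧ u ≠ w ∧ v ≠ w ∧ t = {u, v, w} ∧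
      u.1 + v.1 + w.1 = 0}

/-- The system contains a Pasch configuration: six distinct points
`x, a, b, c, d, t` with `{x,a,b}`, `{x,c,d}`, `{t,a,c}`, `{t,b,d}` all triples. -/
def HasPasch {α : Type u} [DecidableEq α] (T : Set (Finset α)) : Prop :=
  ∃ x a b c d t : α, ({x, a, b, c, d, t} : Finset α).card = 6 ∧
    ({x, a, b} : Finset α) ∈ T ∧ ({x, c, d} : Finset α) ∈ T ∧
    ({t, a, c} : Finset α) ∈ T ∧ ({t, b, d} : Finset α) ∈ T

/-- Three commuting involutions all of whose nontrivial products are fixed-point free generate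
a free action of a group of order 8, so the orbits partition the set into blocks of size 8. -/
lemma eight_dvd {β : Type u} [DecidableEq β] [Fintype β] (f g h : β → β)
    (ff : ∀ c, f (f c) = c) (gg : ∀ c, g (g c) = c) (hh : ∀ c, h (h c) = c)
    (fg : ∀ c, f (g c) = g (f c)) (fh : ∀ c, f (h c) = h (f c)) (gh : ∀ c, g (h c) = h (g c))
    (n1 : ∀ c, f c ≠ c) (n2 : ∀ c, g c ≠ c) (n3 : ∀ c, g (f c) ≠ c) (n4 : ∀ c, h c ≠ c)
    (n5 : ∀ c, h (f c) ≠ c) (n6 : ∀ c, h (g c) ≠ c) (n7 : ∀ c, h (g (f c)) ≠ c) :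
    8 ∣ Fintype.card β := by
  let φ : β → Finset β := fun c =>
    {c, f c, g c, g (f c), h c, h (f c), h (g c), h (g (f c))}
  have mem : ∀ c d, d ∈ φ c ↔ d = c ∨ d = f c ∨ d = g c ∨ d = g (f c) ∨ d = h c ∨
      d = h (f c) ∨ d = h (g c) ∨ d = h (g (f c)) := by
    intro c d; simp [φ]
  have inv : ∀ c, φ (f c) = φ c ∧ φ (g c) = φ c ∧ φ (h c) = φ c := by
    intro c
    refine ⟨?_, ?_, ?_⟩ <;> ext d <;> simp only [mem, fg, fh, gh, ff, gg, hh] <;> tauto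
  have fib : ∀ c d, φ d = φ c ↔ d ∈ φ c := by
    intro c d
    constructor
    · intro e; rw [← e, mem]; exact Or.inl rfl
    · intro e
      rw [mem] at e
      rcases e with e | e | e | e | e | e | e | e <;> subst e <;>
        simp only [(inv _).1, (inv _).2.1, (inv _).2.2]
  have gi : Function.Injective g := fun a b e => by rw [← gg a, e, gg]
  have hi : Function.Injective h := fun a b e => by rw [← hh a, e, hh]
  have card8 : ∀ c, (φ c).card = 8 := by
    intro c
    have m1 := n1 c
    have m2 := n2 c
    have m3 := n3 c
    have m4 := n4 c
    have m5 := n5 c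
    have m6 := n6 c
    have m7 := n7 c
    -- the same statements at the other points of the orbit of `c`
    have k1 := n2 (f c)
    have k2 := n4 (f c)
    have k3 := n4 (g c)
    have k4 := n4 (g (f c))
    have k5 := n3 (f c)
    have k6 := n5 (f c)
    have k7 := n7 (f c)
    have k8 := n6 (f c)
    have k9 := n6 (g c)
    have k10 := n7 (g c)
    have k11 := n5 (g c)
    have k12 := n5 (g (f c))
    have k13 := n6 (g (f c))
    have k14 := n7 (g (f c))
    simp only [fg, ff, gg] at k1 k2 k3 k4 k5 k6 k7 k8 k9 k10 k11 k12 k13 k14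
    have m1' : g (f c) ≠ g c := fun e => m1 (gi e)
    have : [c, f c, g c, g (f c), h c, h (f c), h (g c), h (g (f c))].Nodup := by
      simp only [List.nodup_cons, List.mem_cons, hi.eq_iff, not_or, List.not_mem_nil]
      grind
    have := List.toFinset_card_of_nodup this
    simpa [φ] using this
  have := Finset.card_eq_sum_card_fiberwise (f := φ) (s := Finset.univ)
    (t := Finset.univ.image φ) (by intro c _; simp)
  rw [Finset.card_univ] at this
  rw [this]
  refine Finset.dvd_sum fun b hb => ?_
  obtain ⟨c, -, rfl⟩ := Finset.mem_image.1 hb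
  have e : Finset.univ.filter (fun d => φ d = φ c) = φ c := by
    ext d; simp [fib]
  rw [e, card8]

/-- A Steiner loop of order 20, given by its multiplication `m` and identity `e`, does not have
two distinct central elements other than `e`. -/
lemma not_two_central {β : Type u} [DecidableEq β] [Fintype β] (m : β → β → β) (e : β)
    (hc : Fintype.card β = 20) (comm : ∀ a b, m a b = m b a) (self : ∀ a, m a a = e)
    (canc : ∀ a b, m a (m a b) = b) (x y : β)
    (cx : ∀ a c, m x (m a c) = m a (m x c)) (cy : ∀ a c, m y (m a c) = m a (m y c))
    (hx : x ≠ e) (hy : y ≠ e) (hxy : x ≠ y) : False := by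
  obtain ⟨a, ha⟩ : ∃ a, a ∉ ({e, x, y, m x y} : Finset β) := by
    by_contra! h
    have h1 : (Finset.univ : Finset β) ⊆ {e, x, y, m x y} := fun a _ => h a
    have h2 := Finset.card_le_card h1
    rw [Finset.card_univ, hc] at h2
    exact absurd (h2.trans Finset.card_le_four) (by norm_num)
  simp only [Finset.mem_insert, Finset.mem_singleton, not_or] at ha
  obtain ⟨a1, a2, a3, a4⟩ := ha
  have inj : ∀ {a b c}, m a c = m b c → a = b := by
    intro a b c h
    rw [← canc c a, comm c a, h, comm b c, canc]
  have fpf : ∀ a, a ≠ e → ∀ c, m a c ≠ c := by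
    intro a ha c h
    apply ha
    rw [← self c]
    nth_rewrite 2 [← h]
    rw [comm a c, canc]
  have fpf2 : ∀ a b, a ≠ b → ∀ c, m a (m b c) ≠ c := by
    intro a b hab c h
    apply hab
    apply inj (c := c)
    rw [← canc a (m b c), h]
  have h8 := eight_dvd (m x) (m y) (m a) (canc x) (canc y) (canc a) (fun c => cx y c)
    (fun c => cx a c) (fun c => cy a c) (fpf x hx) (fpf y hy) (fpf2 y x hxy.symm)
    (fpf a a1) (fpf2 a x a2) (fpf2 a y a3) ?_
  · rw [hc] at h8; omega
  · -- centrality turns `y * (x * c)` into `(x * y) * c`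
    intro c
    have : m y (m x c) = m (m x y) c := by
      rw [comm x c, cy, comm y x, comm]
    rw [this]
    exact fpf2 a _ a4 c

section Loop

variable {α : Type u} [DecidableEq α] {T : Set (Finset α)}

lemma IsSTS.distinct (hT : IsSTS T) {a b c : α} (h : ({a, b, c} : Finset α) ∈ T) :
    a ≠ b ∧ a ≠ c ∧ b ≠ c := by
  have h3 := hT.1 _ h
  refine ⟨?_, ?_, ?_⟩ <;> rintro rfl
  · have := Finset.card_le_two (a := a) (b := c)
    simp at h3; omega
  · have := Finset.card_le_two (a := a) (b := b)
    rw [Finset.pair_comm b a] at h3; simp at h3; omega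
  · have := Finset.card_le_two (a := a) (b := b)
    simp at h3; omega

lemma IsSTS.third_unique (hT : IsSTS T) {a b c d : α} (h : ({a, b, c} : Finset α) ∈ T)
    (h' : ({a, b, d} : Finset α) ∈ T) : c = d := by
  obtain ⟨n1, n2, n3⟩ := hT.distinct h
  have := (hT.2 a b n1).unique ⟨h, by simp, by simp⟩ ⟨h', by simp, by simp⟩
  have hc : c ∈ ({a, b, d} : Finset α) := by rw [← this]; simp
  simp at hc
  grind

lemma IsSTS.exists_third (hT : IsSTS T) (a b : α) (hab : a ≠ b) :
    ∃ c, ({a, b, c} : Finset α) ∈ T := by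
  obtain ⟨t, ⟨ht, ha, hb⟩, -⟩ := hT.2 a b hab
  have h1 : ({a, b} : Finset α) ⊆ t := by
    intro z hz; simp at hz; rcases hz with rfl | rfl <;> assumption
  have h2 : (t \ {a, b}).card = 1 := by
    rw [Finset.card_sdiff_of_subset h1, hT.1 t ht, Finset.card_pair hab]
  obtain ⟨c, hc⟩ := Finset.card_eq_one.1 h2
  refine ⟨c, ?_⟩
  have : t = {a, b, c} := by
    rw [← Finset.sdiff_union_of_subset h1, hc]
    ext z; simp; tauto
  rwa [← this]

lemma swap12 {a b c : α} (h : ({a, b, c} : Finset α) ∈ T) : ({b, a, c} : Finset α) ∈ T := by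
  rwa [Finset.insert_comm]

lemma swap23 {a b c : α} (h : ({a, b, c} : Finset α) ∈ T) : ({a, c, b} : Finset α) ∈ T := by
  rwa [Finset.pair_comm]

/-- The Steiner loop multiplication on `Option α`, with identity `none`, built from a function
`third` giving the third point of the triple through two distinct points; the value of
`third` on equal points is not used. -/
def loopMul (third : α → α → α) : Option α → Option α → Option α
  | none, b => b
  | some a, none => some a
  | some a, some b => if a = b then none else some (third a b)

variable {third : α → α → α}

lemma third_eq (hT : IsSTS T) (h3 : ∀ a b, a ≠ b → ({a, b, third a b} : Finset α) ∈ T)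
    {a b c : α} (h : ({a, b, c} : Finset α) ∈ T) :
    loopMul third (some a) (some b) = some c := by
  have n := (hT.distinct h).1
  simp only [loopMul, if_neg n]
  rw [hT.third_unique (h3 a b n) h]

lemma op_comm (hT : IsSTS T) (h3 : ∀ a b, a ≠ b → ({a, b, third a b} : Finset α) ∈ T)
    (a b : Option α) : loopMul third a b = loopMul third b a := by
  rcases a with _ | a <;> rcases b with _ | b <;> try rfl
  by_cases h : a = b
  · rw [h]
  · rw [third_eq hT h3 (h3 a b h), third_eq hT h3 (swap12 (h3 a b h))]

lemma op_self (a : Option α) : loopMul third a a = none := by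
  rcases a with _ | a <;> simp [loopMul]

lemma op_cancel (hT : IsSTS T) (h3 : ∀ a b, a ≠ b → ({a, b, third a b} : Finset α) ∈ T)
    (a b : Option α) : loopMul third a (loopMul third a b) = b := by
  rcases a with _ | a <;> rcases b with _ | b <;> try rfl
  · exact op_self _
  by_cases h : a = b
  · subst h; rw [op_self]; rfl
  · rw [third_eq hT h3 (h3 a b h), third_eq hT h3 (swap23 (h3 a b h))]

/-- A Veblen point is central in the Steiner loop. -/
lemma op_central (hT : IsSTS T) (h3 : ∀ a b, a ≠ b → ({a, b, third a b} : Finset α) ∈ T)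
    {x : α} (hx : IsVeblen T x) (a c : Option α) :
    loopMul third (some x) (loopMul third a c) =
      loopMul third a (loopMul third (some x) c) := by
  rcases a with _ | a
  · rfl
  rcases c with _ | c
  · exact op_comm hT h3 _ _
  by_cases hac : a = c
  · subst hac
    rw [op_self, op_comm hT h3 (some x) (some a), op_cancel hT h3]
    rfl
  by_cases hcx : c = x
  · subst hcx
    rw [op_self, op_comm hT h3 (some a) (some c), op_cancel hT h3]
    rfl
  have ht := h3 a c hac
  rw [third_eq hT h3 ht]
  have hd := h3 x c (Ne.symm hcx)
  rw [third_eq hT h3 hd]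
  by_cases htx : x = third a c
  · -- here `{x, c, a}` is a triple, and both sides are the identity
    rw [← htx] at ht ⊢
    have hd' : third x c = a :=
      hT.third_unique hd (swap12 (swap23 (swap12 ht)))
    rw [hd', op_self, op_self]
  · have hs := h3 x _ htx
    rw [third_eq hT h3 hs, third_eq hT h3 (hx _ _ _ _ _ hd hs ht)]

end Loop

/-- Every Steiner triple system of order 19 has at most one Veblen point. -/
theorem sts19_at_most_one_veblen {α : Type u} [DecidableEq α] [Fintype α]
    (T : Set (Finset α)) (hcard : Fintype.card α = 19) (hT : IsSTS T) :
    ∀ x y : α, IsVeblen T x → IsVeblen T y → x = y := by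
  intro x y hx hy
  by_contra hxy
  have ex : ∀ a b : α, ∃ c, a ≠ b → ({a, b, c} : Finset α) ∈ T := by
    intro a b
    by_cases h : a = b
    · exact ⟨a, fun h' => absurd h h'⟩
    · obtain ⟨c, hc⟩ := hT.exists_third a b h
      exact ⟨c, fun _ => hc⟩
  choose third h3 using ex
  exact not_two_central (loopMul third) none (by rw [Fintype.card_option, hcard])
    (op_comm hT h3) op_self (op_cancel hT h3) (some x) (some y)
    (op_central hT h3 hx) (op_central hT h3 hy) (by simp) (by simp) (by simpa using hxy)
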